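/- arXiv:0901.0192 — 4 statements merged into one kernel-verified Lean document; each statement's English description precedes it below -/
import Mathlib

section
/- Let S : ℝ × ℝ → ℝ be infinitely differentiable, and suppose the mixed partial derivative S_{xy}(x,y) := ∂²S/∂x∂y is strictly positive at every point. For x, y, ε, δ ∈ ℝ define the second mixed difference A(x,y,ε,δ) := S(x+ε, y+δ) − S(x+ε, y) − S(x, y+δ) + S(x,y). If S satisfies the Samuelson area ratio condition A(x,y,ε,δ)·A(x,y,−ε,−δ) = A(x,y,ε,−δ)·A(x,y,−ε,δ) for all x, y, ε, δ ∈ ℝ, then there exist infinitely differentiable functions f, g : ℝ → ℝ with f(x) > 0 and g(y) > 0 for all x, y, such that S_{xy}(x,y) = f(x)·g(y) for all x, y ∈ ℝ (i.e. log S_{xy} splits additively as a function of x plus a function of y). -/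
/-!
The mixed difference is the area which `S` assigns to a rectangle. Applied at the common corner of
four adjacent cells of a grid with constant steps `ε` and `δ`, the area ratio condition says that
the matrix of cell areas has vanishing adjacent `2 × 2` minors. Since `S_{xy} > 0`, no cell area is
zero, so all minors of the matrix vanish (`minor_of_adjacent`). Subdividing the rectangle with
corners `(x, y)` and `(x', y')` ever more finely, while keeping track only of the four cells based at
its corners, and dividing by the steps, gives in the limit
`S_{xy}(x', y') * S_{xy}(x, y) = S_{xy}(x', y) * S_{xy}(x, y')`. Hence `S_{xy}` is the product of
`f x = S_{xy}(x, 0)` and `g y = S_{xy}(0, y) / S_{xy}(0, 0)`. No derivative of `S` beyond `S_{xy}`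
enters, except for the smoothness of `f` and `g`.
-/

/-- Partial derivative in the first (x) variable. -/
noncomputable def pdx (F : ℝ × ℝ → ℝ) : ℝ × ℝ → ℝ :=
  fun p => deriv (fun a => F (a, p.2)) p.1

/-- Partial derivative in the second (y) variable. -/
noncomputable def pdy (F : ℝ × ℝ → ℝ) : ℝ × ℝ → ℝ :=
  fun p => deriv (fun b => F (p.1, b)) p.2

/-- The mixed second partial derivative `S_{xy} = ∂²S/∂x∂y`. -/
noncomputable def Sxy (S : ℝ × ℝ → ℝ) (x y : ℝ) : ℝ :=
  pdx (pdy S) (x, y)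

/-- The second mixed difference of `S` based at `(x,y)` with increments `(ε,δ)`. -/
def mixedDiff (S : ℝ × ℝ → ℝ) (x y ε δ : ℝ) : ℝ :=
  S (x + ε, y + δ) - S (x + ε, y) - S (x, y + δ) + S (x, y)

open Filter Topology

lemma pdx_hasDerivAt {F : ℝ × ℝ → ℝ} (hF : ContDiff ℝ (⊤ : ℕ∞) F) (x y : ℝ) :
    HasDerivAt (fun a => F (a, y)) (pdx F (x, y)) x := by
  have hd : Differentiable ℝ F := hF.differentiable (by simp)
  have : Differentiable ℝ (fun a => F (a, y)) := by fun_prop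
  exact (this x).hasDerivAt

lemma pdy_hasDerivAt {F : ℝ × ℝ → ℝ} (hF : ContDiff ℝ (⊤ : ℕ∞) F) (x y : ℝ) :
    HasDerivAt (fun b => F (x, b)) (pdy F (x, y)) y := by
  have hd : Differentiable ℝ F := hF.differentiable (by simp)
  have : Differentiable ℝ (fun b => F (x, b)) := by fun_prop
  exact (this y).hasDerivAt

lemma pdx_contDiff {F : ℝ × ℝ → ℝ} (hF : ContDiff ℝ (⊤ : ℕ∞) F) :
    ContDiff ℝ (⊤ : ℕ∞) (pdx F) := by
  have hd : Differentiable ℝ F := hF.differentiable (by simp)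
  have h : pdx F = fun p => fderiv ℝ F p (1, 0) := by
    funext p
    have h1 : HasDerivAt (fun a : ℝ => (a, p.2)) ((1 : ℝ), (0 : ℝ)) p.1 :=
      (hasDerivAt_id p.1).prodMk (hasDerivAt_const p.1 p.2)
    exact ((hd p).hasFDerivAt.comp_hasDerivAt p.1 h1).deriv
  rw [h]
  exact (hF.fderiv_right (by simp)).clm_apply contDiff_const

lemma pdy_contDiff {F : ℝ × ℝ → ℝ} (hF : ContDiff ℝ (⊤ : ℕ∞) F) :
    ContDiff ℝ (⊤ : ℕ∞) (pdy F) := by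
  have hd : Differentiable ℝ F := hF.differentiable (by simp)
  have h : pdy F = fun p => fderiv ℝ F p (0, 1) := by
    funext p
    have h1 : HasDerivAt (fun b : ℝ => (p.1, b)) ((0 : ℝ), (1 : ℝ)) p.2 :=
      (hasDerivAt_const p.2 p.1).prodMk (hasDerivAt_id p.2)
    exact ((hd p).hasFDerivAt.comp_hasDerivAt p.2 h1).deriv
  rw [h]
  exact (hF.fderiv_right (by simp)).clm_apply contDiff_const

/-- The function `b ↦ S (x + ε, b) - S (x, b)` is strictly monotone, because its derivative has the
sign of `ε`: the function `S_y (·, b)` is strictly increasing. -/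
lemma mixedDiff_ne_zero {S : ℝ × ℝ → ℝ} (hS : ContDiff ℝ (⊤ : ℕ∞) S)
    (hpos : ∀ x y : ℝ, 0 < Sxy S x y) (x y : ℝ) {ε δ : ℝ} (hε : ε ≠ 0) (hδ : δ ≠ 0) :
    mixedDiff S x y ε δ ≠ 0 := by
  have hmono : ∀ b, StrictMono (fun a => pdy S (a, b)) := fun b =>
    strictMono_of_deriv_pos fun a => hpos a b
  have hder : ∀ b, HasDerivAt (fun b => S (x + ε, b) - S (x, b))
      (pdy S (x + ε, b) - pdy S (x, b)) b := fun b =>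
    (pdy_hasDerivAt hS (x + ε) b).sub (pdy_hasDerivAt hS x b)
  have hinj : Function.Injective (fun b => S (x + ε, b) - S (x, b)) := by
    rcases lt_or_gt_of_ne hε with h | h
    · refine (strictAnti_of_deriv_neg fun b => ?_).injective
      rw [(hder b).deriv]
      exact sub_neg.2 (hmono b (by linarith))
    · refine (strictMono_of_deriv_pos fun b => ?_).injective
      rw [(hder b).deriv]
      exact sub_pos.2 (hmono b (by linarith))
  intro h0
  apply hδ
  have h1 : y + δ = y := hinj (by
    simp only [mixedDiff] at h0 ⊢
    linarith)
  linarith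

/-- A nowhere zero infinite matrix whose adjacent `2 × 2` minors vanish has rank one. -/
lemma minor_of_adjacent (a : ℕ → ℕ → ℝ) (hne : ∀ i j, a i j ≠ 0)
    (hadj : ∀ i j, a (i + 1) (j + 1) * a i j = a (i + 1) j * a i (j + 1)) (i j : ℕ) :
    a i j * a 0 0 = a i 0 * a 0 j := by
  -- The ratio of consecutive rows does not depend on the column.
  have hrow : ∀ i j, a (i + 1) j * a i 0 = a (i + 1) 0 * a i j := by
    intro i j
    induction j with
    | zero => ring
    | succ j ih =>
      apply mul_right_cancel₀ (hne i j)
      linear_combination a i 0 * hadj i j + a i (j + 1) * ih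
  induction i with
  | zero => ring
  | succ i ih =>
    apply mul_right_cancel₀ (hne i 0)
    linear_combination a 0 0 * hrow i j + a (i + 1) 0 * ih

/-- The area ratio condition at the common corner `(x + ε, y + δ)` of four adjacent cells, with the
four areas rewritten as those of cells based at the corners nearest to `(x, y)`. -/
lemma mixedDiff_adjacent {S : ℝ × ℝ → ℝ}
    (harea : ∀ x y ε δ : ℝ,
      mixedDiff S x y ε δ * mixedDiff S x y (-ε) (-δ) =
        mixedDiff S x y ε (-δ) * mixedDiff S x y (-ε) δ) (x y ε δ : ℝ) :
    mixedDiff S (x + ε) (y + δ) ε δ * mixedDiff S x y ε δ =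
      mixedDiff S (x + ε) y ε δ * mixedDiff S x (y + δ) ε δ := by
  have h := harea (x + ε) (y + δ) ε δ
  simp only [mixedDiff, add_neg_cancel_right] at h ⊢
  linear_combination h

/-- The minor relation for the corner cells of a grid with `n × m` steps, extending from `(x, y)` to
`(x', y')`. -/
lemma mixedDiff_corners {S : ℝ × ℝ → ℝ} (hS : ContDiff ℝ (⊤ : ℕ∞) S)
    (hpos : ∀ x y : ℝ, 0 < Sxy S x y)
    (harea : ∀ x y ε δ : ℝ,
      mixedDiff S x y ε δ * mixedDiff S x y (-ε) (-δ) =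
        mixedDiff S x y ε (-δ) * mixedDiff S x y (-ε) δ)
    {x y x' y' ε δ : ℝ} (hε : ε ≠ 0) (hδ : δ ≠ 0) (n m : ℕ)
    (hn : x + n * ε = x') (hm : y + m * δ = y') :
    mixedDiff S x' y' ε δ * mixedDiff S x y ε δ =
      mixedDiff S x' y ε δ * mixedDiff S x y' ε δ := by
  have h := minor_of_adjacent (fun i j => mixedDiff S (x + i * ε) (y + j * δ) ε δ)
    (fun i j => mixedDiff_ne_zero hS hpos _ _ hε hδ)
    (fun i j => by
      have := mixedDiff_adjacent harea (x + i * ε) (y + j * δ) ε δ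
      push_cast
      simpa only [add_mul, one_mul, add_assoc] using this) n m
  simpa [hn, hm] using h

/-- A difference quotient along the steps `c / (n + 1)`. -/
lemma tendsto_quotient {h : ℝ → ℝ} {h' z c : ℝ} (hh : HasDerivAt h h' z) (hc : c ≠ 0) :
    Tendsto (fun n : ℕ => (h (z + c / (n + 1)) - h z) / (c / (n + 1))) atTop (𝓝 h') := by
  have ht : Tendsto (fun n : ℕ => c / ((n : ℝ) + 1)) atTop (𝓝[≠] 0) := by
    refine tendsto_nhdsWithin_iff.2 ⟨?_, Eventually.of_forall fun n => ?_⟩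
    · simpa [div_eq_mul_inv] using
        (tendsto_one_div_add_atTop_nhds_zero_nat (𝕜 := ℝ)).const_mul c
    · exact div_ne_zero hc (by positivity)
  refine (hh.tendsto_slope_zero.comp ht).congr fun n => ?_
  simp only [Function.comp, smul_eq_mul]
  ring

lemma div_mul_div_congr {p q r s : ℝ} (h : p * q = r * s) (c : ℝ) :
    p / c * (q / c) = r / c * (s / c) := by
  rw [div_mul_div_comm, div_mul_div_comm, h]

/-- All `2 × 2` minors of `S_{xy}` vanish. The limit of the corner relation is taken first in the
vertical step and then in the horizontal one, so that each limit is an ordinary derivative. -/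
lemma Sxy_minor {S : ℝ × ℝ → ℝ} (hS : ContDiff ℝ (⊤ : ℕ∞) S)
    (hpos : ∀ x y : ℝ, 0 < Sxy S x y)
    (harea : ∀ x y ε δ : ℝ,
      mixedDiff S x y ε δ * mixedDiff S x y (-ε) (-δ) =
        mixedDiff S x y ε (-δ) * mixedDiff S x y (-ε) δ) (x y x' y' : ℝ) :
    Sxy S x' y' * Sxy S x y = Sxy S x' y * Sxy S x y' := by
  rcases eq_or_ne x' x with rfl | hx
  · ring
  rcases eq_or_ne y' y with rfl | hy
  · ring
  have hx0 : x' - x ≠ 0 := sub_ne_zero.2 hx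
  have hy0 : y' - y ≠ 0 := sub_ne_zero.2 hy
  have hlim1 : ∀ ε a b : ℝ, Tendsto
      (fun m : ℕ => mixedDiff S a b ε ((y' - y) / (m + 1)) / ((y' - y) / (m + 1))) atTop
      (𝓝 (pdy S (a + ε, b) - pdy S (a, b))) := by
    intro ε a b
    refine (tendsto_quotient ((pdy_hasDerivAt hS (a + ε) b).sub (pdy_hasDerivAt hS a b))
      hy0).congr fun m => ?_
    simp only [mixedDiff, Pi.sub_apply]
    ring
  have hlim2 : ∀ a b : ℝ, Tendsto
      (fun n : ℕ => (pdy S (a + (x' - x) / (n + 1), b) - pdy S (a, b)) / ((x' - x) / (n + 1)))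
      atTop (𝓝 (Sxy S a b)) := fun a b =>
    tendsto_quotient (pdx_hasDerivAt (pdy_contDiff hS) a b) hx0
  have key : ∀ n : ℕ,
      (pdy S (x' + (x' - x) / (n + 1), y') - pdy S (x', y')) *
        (pdy S (x + (x' - x) / (n + 1), y) - pdy S (x, y)) =
      (pdy S (x' + (x' - x) / (n + 1), y) - pdy S (x', y)) *
        (pdy S (x + (x' - x) / (n + 1), y') - pdy S (x, y')) := by
    intro n
    refine tendsto_nhds_unique ((hlim1 _ x' y').mul (hlim1 _ x y))
      (((hlim1 _ x' y).mul (hlim1 _ x y')).congr fun m => ?_)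
    have hn : (n : ℝ) + 1 ≠ 0 := by positivity
    have hm : (m : ℝ) + 1 ≠ 0 := by positivity
    have h := mixedDiff_corners hS hpos harea (x := x) (y := y) (x' := x') (y' := y')
      (div_ne_zero hx0 hn) (div_ne_zero hy0 hm) (n + 1) (m + 1)
      (by push_cast; field_simp; ring) (by push_cast; field_simp; ring)
    exact div_mul_div_congr h.symm _
  refine tendsto_nhds_unique ((hlim2 x' y').mul (hlim2 x y))
    (((hlim2 x' y).mul (hlim2 x y')).congr fun n => ?_)
  exact div_mul_div_congr (key n).symm _

/-- If `S` is smooth with everywhere positive mixed partial `S_{xy}` and satisfies the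
Samuelson area ratio condition, then `S_{xy}` factors as `f(x) * g(y)` with `f, g`
smooth and positive. -/
theorem samuelson_area_condition_implies_separable_mixed_partial
    (S : ℝ × ℝ → ℝ) (hS : ContDiff ℝ (⊤ : ℕ∞) S)
    (hpos : ∀ x y : ℝ, 0 < Sxy S x y)
    (harea : ∀ x y ε δ : ℝ,
      mixedDiff S x y ε δ * mixedDiff S x y (-ε) (-δ) =
        mixedDiff S x y ε (-δ) * mixedDiff S x y (-ε) δ) :
    ∃ f g : ℝ → ℝ, ContDiff ℝ (⊤ : ℕ∞) f ∧ ContDiff ℝ (⊤ : ℕ∞) g ∧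
      (∀ x : ℝ, 0 < f x) ∧ (∀ y : ℝ, 0 < g y) ∧
      ∀ x y : ℝ, Sxy S x y = f x * g y := by
  have hu : ContDiff ℝ (⊤ : ℕ∞) (pdx (pdy S)) := pdx_contDiff (pdy_contDiff hS)
  refine ⟨fun x => Sxy S x 0, fun y => Sxy S 0 y / Sxy S 0 0, ?_, ?_, fun x => hpos x 0,
    fun y => div_pos (hpos 0 y) (hpos 0 0), fun x y => ?_⟩
  · exact hu.comp (contDiff_id.prodMk contDiff_const)
  · exact (hu.comp (contDiff_const.prodMk contDiff_id)).div_const _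
  · have h := Sxy_minor hS hpos harea 0 0 x y
    rw [← mul_div_assoc, eq_div_iff (hpos 0 0).ne', h]
end

section
/- Let h : ℝ × ℝ → ℝ be infinitely differentiable with h(x,y) > 0 everywhere, and suppose h·h_{xy} = h_x·h_y at every point (where subscripts denote partial derivatives). Then there exist infinitely differentiable functions f, g : ℝ → ℝ with f > 0 and g > 0 everywhere such that h(x,y) = f(x)·g(y) for all (x,y) ∈ ℝ². -/
/-!
The hypothesis says that `∂ₓ (h_y / h) = (h h_{xy} - h_x h_y) / h² = 0`, so the logarithmic
derivative `h_y / h` does not depend on `x`. Hence `h (x, y)` and `h (0, y)` have the same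
logarithmic derivative in `y`, their quotient is constant in `y`, and
`h (x, y) = (h (x, 0) / h (0, 0)) * h (0, y)`. Smoothness of `h` enters to make `h_y`
differentiable in `x`, via `pdy h p = fderiv ℝ h p (0, 1)`.
-/

lemma pdy_eq_fderiv {h : ℝ × ℝ → ℝ} (hd : Differentiable ℝ h) (p : ℝ × ℝ) :
    pdy h p = fderiv ℝ h p (0, 1) := by
  have hc : HasDerivAt (fun b : ℝ => (p.1, b)) ((0 : ℝ), (1 : ℝ)) p.2 :=
    (hasDerivAt_const p.2 p.1).prodMk (hasDerivAt_id p.2)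
  exact ((hd p).hasFDerivAt.comp_hasDerivAt p.2 hc).deriv

lemma differentiable_pdy {h : ℝ × ℝ → ℝ} (hsm : ContDiff ℝ (⊤ : ℕ∞) h) :
    Differentiable ℝ (pdy h) := by
  have hd : Differentiable ℝ h := hsm.differentiable (by simp)
  have hf : ContDiff ℝ (⊤ : ℕ∞) (fderiv ℝ h) := hsm.fderiv_right le_rfl
  have heq : pdy h = fun p => fderiv ℝ h p (0, 1) := funext (pdy_eq_fderiv hd)
  rw [heq]
  exact (hf.differentiable (by simp)).clm_apply (differentiable_const _)

lemma hasDerivAt_fst {F : ℝ × ℝ → ℝ} (hF : Differentiable ℝ F) (x y : ℝ) :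
    HasDerivAt (fun a => F (a, y)) (pdx F (x, y)) x := by
  have hc : Differentiable ℝ (fun a => F (a, y)) := by fun_prop
  exact (hc x).hasDerivAt

lemma hasDerivAt_snd {F : ℝ × ℝ → ℝ} (hF : Differentiable ℝ F) (x y : ℝ) :
    HasDerivAt (fun b => F (x, b)) (pdy F (x, y)) y := by
  have hc : Differentiable ℝ (fun b => F (x, b)) := by fun_prop
  exact (hc y).hasDerivAt

/-- If `h · h_{xy} = h_x · h_y`, the logarithmic `y`-derivative of `h` is independent of `x`. -/
lemma logDeriv_snd_const {h : ℝ × ℝ → ℝ} (hsm : ContDiff ℝ (⊤ : ℕ∞) h)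
    (hpos : ∀ p : ℝ × ℝ, 0 < h p)
    (hid : ∀ p : ℝ × ℝ, h p * pdx (pdy h) p = pdx h p * pdy h p) (x x' y : ℝ) :
    pdy h (x, y) / h (x, y) = pdy h (x', y) / h (x', y) := by
  have hd : Differentiable ℝ h := hsm.differentiable (by simp)
  have key : ∀ a, HasDerivAt (fun a => pdy h (a, y) / h (a, y)) 0 a := by
    intro a
    refine ((hasDerivAt_fst (differentiable_pdy hsm) a y).div (hasDerivAt_fst hd a y)
      (hpos _).ne').congr_deriv ?_
    rw [div_eq_zero_iff]
    left
    linarith [hid (a, y)]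
  exact is_const_of_deriv_eq_zero (fun a => (key a).differentiableAt)
    (fun a => (key a).deriv) x x'

/-- If `h` is smooth, everywhere positive, and satisfies `h · h_{xy} = h_x · h_y`
at every point, then `h` separates multiplicatively: `h(x,y) = f(x) · g(y)` with
`f, g` smooth and positive. -/
theorem multiplicative_separation_of_hess_identity
    (h : ℝ × ℝ → ℝ) (hsm : ContDiff ℝ (⊤ : ℕ∞) h)
    (hpos : ∀ p : ℝ × ℝ, 0 < h p)
    (hid : ∀ p : ℝ × ℝ, h p * pdx (pdy h) p = pdx h p * pdy h p) :
    ∃ f g : ℝ → ℝ, ContDiff ℝ (⊤ : ℕ∞) f ∧ ContDiff ℝ (⊤ : ℕ∞) g ∧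
      (∀ x : ℝ, 0 < f x) ∧ (∀ y : ℝ, 0 < g y) ∧
      ∀ x y : ℝ, h (x, y) = f x * g y := by
  have hd : Differentiable ℝ h := hsm.differentiable (by simp)
  refine ⟨fun x => h (x, 0) / h (0, 0), fun y => h (0, y), ?_, ?_,
    fun x => div_pos (hpos _) (hpos _), fun y => hpos _, fun x y => ?_⟩
  · exact (hsm.comp (contDiff_id.prodMk contDiff_const)).div_const _
  · exact hsm.comp (contDiff_const.prodMk contDiff_id)
  · have key : ∀ b, HasDerivAt (fun b => h (x, b) / h (0, b)) 0 b := by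
      intro b
      refine ((hasDerivAt_snd hd x b).div (hasDerivAt_snd hd 0 b)
        (hpos _).ne').congr_deriv ?_
      have hl := logDeriv_snd_const hsm hpos hid x 0 b
      rw [div_eq_div_iff (hpos _).ne' (hpos _).ne'] at hl
      rw [div_eq_zero_iff]
      left
      linarith
    have hq : h (x, y) / h (0, y) = h (x, 0) / h (0, 0) :=
      is_const_of_deriv_eq_zero (fun b => (key b).differentiableAt)
        (fun b => (key b).deriv) y 0
    exact (div_eq_iff (hpos _).ne').mp hq
end

section
/- Let f, g : ℝ → ℝ be continuous, let F, G : ℝ → ℝ be antiderivatives (F' = f, G' = g), and let S : ℝ × ℝ → ℝ be a twice continuously differentiable function whose mixed partial derivative factors as S_{xy}(x,y) = f(x)·g(y) for all (x,y). Then the second mixed difference factors as A(x,y,ε,δ) := S(x+ε, y+δ) − S(x+ε, y) − S(x, y+δ) + S(x,y) = (F(x+ε) − F(x))·(G(y+δ) − G(y)), and consequently S satisfies the Samuelson area ratio condition A(x,y,ε,δ)·A(x,y,−ε,−δ) = A(x,y,ε,−δ)·A(x,y,−ε,δ) for all x, y, ε, δ ∈ ℝ. -/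
lemma sub_eq_sub_of_hasDerivAt {u v w : ℝ → ℝ} (hu : ∀ t, HasDerivAt u (w t) t)
    (hv : ∀ t, HasDerivAt v (w t) t) (a b : ℝ) : u b - u a = v b - v a := by
  have h : ∀ t, HasDerivAt (fun s => u s - v s) 0 t := fun t => by
    simpa using (hu t).fun_sub (hv t)
  have := is_const_of_deriv_eq_zero (fun t => (h t).differentiableAt) (fun t => (h t).deriv) a b
  linarith

lemma hasDerivAt_pdy {S : ℝ × ℝ → ℝ} (hS : ContDiff ℝ 2 S) (x y : ℝ) :
    HasDerivAt (fun b => S (x, b)) (pdy S (x, y)) y := by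
  have hd : Differentiable ℝ S := hS.differentiable (by norm_num)
  have h : Differentiable ℝ (fun b : ℝ => S (x, b)) := by fun_prop
  exact (h y).hasDerivAt

lemma pdy_eq_fderiv_s6 {S : ℝ × ℝ → ℝ} (hS : ContDiff ℝ 2 S) (p : ℝ × ℝ) :
    pdy S p = fderiv ℝ S p (0, 1) := by
  have hd : Differentiable ℝ S := hS.differentiable (by norm_num)
  exact ((hd p).hasFDerivAt.comp_hasDerivAt p.2
    ((hasDerivAt_const p.2 p.1).prodMk (hasDerivAt_id p.2))).deriv

lemma hasDerivAt_pdx_pdy {S : ℝ × ℝ → ℝ} (hS : ContDiff ℝ 2 S) (x y : ℝ) :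
    HasDerivAt (fun a => pdy S (a, y)) (pdx (pdy S) (x, y)) x := by
  have hd : Differentiable ℝ (fderiv ℝ S) :=
    (hS.fderiv_right (m := 1) (by norm_num)).differentiable (by norm_num)
  have h : Differentiable ℝ (fun a : ℝ => pdy S (a, y)) := by
    simp only [pdy_eq_fderiv_s6 hS]
    fun_prop
  exact (h x).hasDerivAt

/-- If `S_{xy}(x,y) = f(x)·g(y)` with `f, g` continuous and `F, G` antiderivatives of
`f, g`, then the second mixed difference factors as
`A(x,y,ε,δ) = (F(x+ε) − F(x))·(G(y+δ) − G(y))`, and consequently `S` satisfies the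
Samuelson area ratio condition. -/
theorem separable_mixed_partial_implies_area_condition
    (f g F G : ℝ → ℝ) (hf : Continuous f) (hg : Continuous g)
    (hF : ∀ t : ℝ, HasDerivAt F (f t) t) (hG : ∀ t : ℝ, HasDerivAt G (g t) t)
    (S : ℝ × ℝ → ℝ) (hS : ContDiff ℝ 2 S)
    (hsep : ∀ x y : ℝ, pdx (pdy S) (x, y) = f x * g y) :
    (∀ x y ε δ : ℝ,
      mixedDiff S x y ε δ = (F (x + ε) - F x) * (G (y + δ) - G y)) ∧
    (∀ x y ε δ : ℝ,
      mixedDiff S x y ε δ * mixedDiff S x y (-ε) (-δ) =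
        mixedDiff S x y ε (-δ) * mixedDiff S x y (-ε) δ) := by
  have key : ∀ x y ε δ : ℝ,
      mixedDiff S x y ε δ = (F (x + ε) - F x) * (G (y + δ) - G y) := by
    intro x y ε δ
    have h1 : ∀ t, pdy S (x + ε, t) - pdy S (x, t) = (F (x + ε) - F x) * g t := fun t => by
      have := sub_eq_sub_of_hasDerivAt
        (fun s => by simpa only [hsep] using hasDerivAt_pdx_pdy hS s t)
        (fun s => (hF s).mul_const (g t)) x (x + ε)
      linarith
    have h2 := sub_eq_sub_of_hasDerivAt
      (fun t => by
        simpa only [h1] using (hasDerivAt_pdy hS (x + ε) t).fun_sub (hasDerivAt_pdy hS x t))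
      (fun t => (hG t).const_mul (F (x + ε) - F x)) y (y + δ)
    unfold mixedDiff
    linarith
  refine ⟨key, fun x y ε δ => ?_⟩
  simp only [key]
  ring
end

section
/- Let U ⊆ ℝ² be open, let f, g : U → ℝ be infinitely differentiable, suppose the gradient of g is nonvanishing on U, and suppose the gradients of f and g are parallel at every point: f_x·g_y − f_y·g_x = 0 on U. Then every point of U has an open neighborhood V ⊆ U and an infinitely differentiable function ψ defined on an open interval containing g(V) such that f = ψ ∘ g on V. -/
open Set Filter Topology

theorem fderiv_apply_eq_pd {F : ℝ × ℝ → ℝ} {p : ℝ × ℝ} (hF : DifferentiableAt ℝ F p) (v : ℝ × ℝ) :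
    fderiv ℝ F p v = v.1 * pdx F p + v.2 * pdy F p := by
  have hx : pdx F p = fderiv ℝ F p (1, 0) := by
    have h1 : HasDerivAt (fun a : ℝ => ((a, p.2) : ℝ × ℝ)) (1, 0) p.1 :=
      (hasDerivAt_id p.1).prodMk (hasDerivAt_const p.1 p.2)
    exact (HasFDerivAt.comp_hasDerivAt p.1 (l := F) (f := fun a : ℝ => ((a, p.2) : ℝ × ℝ))
      hF.hasFDerivAt h1).deriv
  have hy : pdy F p = fderiv ℝ F p (0, 1) := by
    have h1 : HasDerivAt (fun b : ℝ => ((p.1, b) : ℝ × ℝ)) (0, 1) p.2 :=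
      (hasDerivAt_const p.2 p.1).prodMk (hasDerivAt_id p.2)
    exact (HasFDerivAt.comp_hasDerivAt p.2 (l := F) (f := fun b : ℝ => ((p.1, b) : ℝ × ℝ))
      hF.hasFDerivAt h1).deriv
  have hv : v = v.1 • ((1, 0) : ℝ × ℝ) + v.2 • ((0, 1) : ℝ × ℝ) := by
    ext <;> simp
  conv_lhs => rw [hv]
  rw [map_add, map_smul, map_smul, hx, hy, smul_eq_mul, smul_eq_mul]

/-- If the gradient of `g` is nonzero and parallel to that of `f`, then `df` vanishes on the
kernel of `dg`. -/
theorem fderiv_eq_zero_of_parallel {f g : ℝ × ℝ → ℝ} {p : ℝ × ℝ}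
    (hf : DifferentiableAt ℝ f p) (hg : DifferentiableAt ℝ g p)
    (hgrad : (pdx g p, pdy g p) ≠ (0, 0))
    (hpar : pdx f p * pdy g p - pdy f p * pdx g p = 0) {v : ℝ × ℝ}
    (hv : fderiv ℝ g p v = 0) : fderiv ℝ f p v = 0 := by
  rw [fderiv_apply_eq_pd hg] at hv
  rw [fderiv_apply_eq_pd hf]
  have h1 : (v.1 * pdx f p + v.2 * pdy f p) * pdx g p = 0 := by
    linear_combination pdx f p * hv - v.2 * hpar
  have h2 : (v.1 * pdx f p + v.2 * pdy f p) * pdy g p = 0 := by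
    linear_combination pdy f p * hv + v.1 * hpar
  by_contra h
  exact hgrad (Prod.ext ((mul_eq_zero.1 h1).resolve_left h) ((mul_eq_zero.1 h2).resolve_left h))

/-- A smooth `g` with nonzero gradient at `p` is the first component of a local diffeomorphism;
the inverse is smooth on a square around the image of `p`, which it maps into `U`. -/
theorem exists_straightening {U : Set (ℝ × ℝ)} (hU : IsOpen U) {g : ℝ × ℝ → ℝ}
    (hg : ContDiffOn ℝ (⊤ : ℕ∞) g U) {p : ℝ × ℝ} (hp : p ∈ U)
    (hgrad : (pdx g p, pdy g p) ≠ (0, 0)) :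
    ∃ (e : OpenPartialHomeomorph (ℝ × ℝ) (ℝ × ℝ)) (r : ℝ), 0 < r ∧ p ∈ e.source ∧
      (∀ q, (e q).1 = g q) ∧ Metric.ball (e p) r ⊆ e.target ∧
      MapsTo e.symm (Metric.ball (e p) r) U ∧
      ContDiffOn ℝ (⊤ : ℕ∞) e.symm (Metric.ball (e p) r) := by
  set a := pdx g p with ha
  set b := pdy g p with hb
  set ℓ : ℝ × ℝ →L[ℝ] ℝ :=
    a • ContinuousLinearMap.snd ℝ ℝ ℝ - b • ContinuousLinearMap.fst ℝ ℝ ℝ with hℓ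
  set Φ : ℝ × ℝ → ℝ × ℝ := fun q => (g q, ℓ q) with hΦ
  have hgU : ∀ q ∈ U, ContDiffAt ℝ (⊤ : ℕ∞) g q := fun q hq => hg.contDiffAt (hU.mem_nhds hq)
  have hΦU : ∀ q ∈ U, ContDiffAt ℝ (⊤ : ℕ∞) Φ q := fun q hq =>
    (hgU q hq).prodMk ℓ.contDiff.contDiffAt
  have htop : ((⊤ : ℕ∞) : WithTop ℕ∞) ≠ 0 := by simp
  set L : ℝ × ℝ →L[ℝ] ℝ × ℝ := (fderiv ℝ g p).prod ℓ with hL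
  have hgd := (hgU p hp).differentiableAt htop
  have hLd : HasFDerivAt Φ L p := hgd.hasFDerivAt.prodMk ℓ.hasFDerivAt
  have hinj : Function.Injective L := by
    refine (injective_iff_map_eq_zero L).2 fun v hv => ?_
    have h1 : v.1 * a + v.2 * b = 0 := by
      rw [← fderiv_apply_eq_pd hgd]; exact congrArg Prod.fst hv
    have h2 : a * v.2 - b * v.1 = 0 := congrArg Prod.snd hv
    have hab : a ^ 2 + b ^ 2 ≠ 0 := by
      intro h
      have : a = 0 := by nlinarith [sq_nonneg a, sq_nonneg b]
      have : b = 0 := by nlinarith [sq_nonneg a, sq_nonneg b]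
      simp_all
    have h3 : v.1 * (a ^ 2 + b ^ 2) = 0 := by linear_combination a * h1 - b * h2
    have h4 : v.2 * (a ^ 2 + b ^ 2) = 0 := by linear_combination b * h1 + a * h2
    exact Prod.ext ((mul_eq_zero.1 h3).resolve_right hab) ((mul_eq_zero.1 h4).resolve_right hab)
  set E : (ℝ × ℝ) ≃L[ℝ] ℝ × ℝ :=
    (LinearEquiv.ofInjectiveEndo (L : ℝ × ℝ →ₗ[ℝ] ℝ × ℝ) hinj).toContinuousLinearEquiv with hE
  have hEL : (E : ℝ × ℝ →L[ℝ] ℝ × ℝ) = L := by ext <;> rfl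
  have hLd' : HasFDerivAt Φ (E : ℝ × ℝ →L[ℝ] ℝ × ℝ) p := hEL ▸ hLd
  let e := (hΦU p hp).toOpenPartialHomeomorph Φ hLd' htop
  have hpe : p ∈ e.source := (hΦU p hp).mem_toOpenPartialHomeomorph_source hLd' htop
  -- Smoothness of the inverse off the base point needs an invertible derivative nearby as well.
  have hW : ∀ᶠ q in 𝓝 p, q ∈ U ∧
      fderiv ℝ Φ q ∈ range ((↑) : ((ℝ × ℝ) ≃L[ℝ] ℝ × ℝ) → ℝ × ℝ →L[ℝ] ℝ × ℝ) := by
    refine (hU.eventually_mem hp).and ?_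
    have hc : ContinuousAt (fderiv ℝ Φ) p := (hΦU p hp).continuousAt_fderiv htop
    apply hc
    rw [hLd'.fderiv]
    exact ContinuousLinearEquiv.nhds E
  have hW' := hW
  rw [← e.left_inv hpe] at hW'
  have hsymm : ContinuousAt e.symm (e p) := e.continuousAt_symm (e.map_source hpe)
  have hev : ∀ᶠ z in 𝓝 (e p), z ∈ e.target ∧ e.symm z ∈ U ∧
      fderiv ℝ Φ (e.symm z) ∈
        range ((↑) : ((ℝ × ℝ) ≃L[ℝ] ℝ × ℝ) → ℝ × ℝ →L[ℝ] ℝ × ℝ) := by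
    refine (e.open_target.eventually_mem (e.map_source hpe)).and (hsymm.tendsto.eventually hW')
  obtain ⟨r, hr, hball⟩ := Metric.eventually_nhds_iff_ball.1 hev
  refine ⟨e, r, hr, hpe, fun q => rfl, fun z hz => (hball z hz).1,
    fun z hz => (hball z hz).2.1, fun z hz => ?_⟩
  obtain ⟨hz1, hz2, E', hE'⟩ := hball z hz
  refine (e.contDiffAt_symm hz1 (f₀' := E') ?_ (hΦU _ hz2)).contDiffWithinAt
  rw [hE']
  exact ((hΦU _ hz2).differentiableAt htop).hasFDerivAt

/-- If `f, g` are smooth on an open set `U`, the gradient of `g` is nonvanishing on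
`U`, and the gradients of `f` and `g` are parallel (`f_x g_y − f_y g_x = 0`) on `U`,
then locally `f` factors through `g`: every point of `U` has an open neighborhood
`V ⊆ U` and a smooth function `ψ` on an open interval containing `g(V)` with
`f = ψ ∘ g` on `V`. -/
theorem parallel_gradients_implies_local_factorization
    (U : Set (ℝ × ℝ)) (hU : IsOpen U)
    (f g : ℝ × ℝ → ℝ) (hf : ContDiffOn ℝ (⊤ : ℕ∞) f U) (hg : ContDiffOn ℝ (⊤ : ℕ∞) g U)
    (hgrad : ∀ p ∈ U, (pdx g p, pdy g p) ≠ (0, 0))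
    (hpar : ∀ p ∈ U, pdx f p * pdy g p - pdy f p * pdx g p = 0) :
    ∀ p ∈ U, ∃ V : Set (ℝ × ℝ), IsOpen V ∧ p ∈ V ∧ V ⊆ U ∧
      ∃ (I : Set ℝ) (ψ : ℝ → ℝ), IsOpen I ∧ I.OrdConnected ∧ g '' V ⊆ I ∧
        ContDiffOn ℝ (⊤ : ℕ∞) ψ I ∧ ∀ q ∈ V, f q = ψ (g q) := by
  intro p hp
  obtain ⟨e, r, hr, hpe, hfst, htgt, hmaps, hsm⟩ := exists_straightening hU hg hp (hgrad p hp)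
  have htop : ((⊤ : ℕ∞) : WithTop ℕ∞) ≠ 0 := by simp
  have hprod : Metric.ball (e p) r =
      Metric.ball (e p).1 r ×ˢ Metric.ball (e p).2 r := (ball_prod_same _ _ _).symm
  have hgs : ∀ z ∈ Metric.ball (e p) r, g (e.symm z) = z.1 := fun z hz => by
    rw [← hfst, e.right_inv (htgt hz)]
  have hconst : ∀ s ∈ Metric.ball (e p).1 r, ∀ t ∈ Metric.ball (e p).2 r,
      f (e.symm (s, t)) = f (e.symm (s, (e p).2)) := by
    intro s hs t ht
    have hd : ∀ u ∈ Metric.ball (e p).2 r,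
        HasDerivAt (fun u => f (e.symm (s, u))) 0 u := by
      intro u hu
      have hz : (s, u) ∈ Metric.ball (e p) r := by rw [hprod]; exact ⟨hs, hu⟩
      have hzn := Metric.isOpen_ball.mem_nhds hz
      have hq := hmaps hz
      have hfd := (hf.contDiffAt (hU.mem_nhds hq)).differentiableAt htop
      have hgd := (hg.contDiffAt (hU.mem_nhds hq)).differentiableAt htop
      have hsd := ((hsm.contDiffAt hzn).differentiableAt htop).hasFDerivAt
      have hline : HasDerivAt (fun u : ℝ => ((s, u) : ℝ × ℝ)) (0, 1) u :=
        (hasDerivAt_const u s).prodMk (hasDerivAt_id u)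
      have hc : HasDerivAt (fun u : ℝ => e.symm (s, u)) (fderiv ℝ e.symm (s, u) (0, 1)) u :=
        hsd.comp_hasDerivAt u hline
      have hcg : HasDerivAt (fun u : ℝ => g (e.symm (s, u)))
          (fderiv ℝ g (e.symm (s, u)) (fderiv ℝ e.symm (s, u) (0, 1))) u :=
        hgd.hasFDerivAt.comp_hasDerivAt u hc
      have hcf : HasDerivAt (fun u : ℝ => f (e.symm (s, u)))
          (fderiv ℝ f (e.symm (s, u)) (fderiv ℝ e.symm (s, u) (0, 1))) u :=
        hfd.hasFDerivAt.comp_hasDerivAt u hc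
      have hcg0 : HasDerivAt (fun u : ℝ => g (e.symm (s, u))) 0 u := by
        refine (hasDerivAt_const u s).congr_of_eventuallyEq ?_
        filter_upwards [Metric.isOpen_ball.mem_nhds hu] with u' hu'
        exact hgs (s, u') (by rw [hprod]; exact ⟨hs, hu'⟩)
      rwa [fderiv_eq_zero_of_parallel hfd hgd (hgrad _ hq) (hpar _ hq)
        (hcg.unique hcg0)] at hcf
    exact Metric.isOpen_ball.is_const_of_deriv_eq_zero (convex_ball _ _).isPreconnected
      (fun u hu => (hd u hu).differentiableAt.differentiableWithinAt)
      (fun u hu => (hd u hu).deriv) ht (Metric.mem_ball_self hr)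
  have hVq : ∀ q ∈ e.source ∩ e ⁻¹' Metric.ball (e p) r,
      (e q).1 ∈ Metric.ball (e p).1 r ∧ (e q).2 ∈ Metric.ball (e p).2 r := by
    rintro q ⟨-, hq⟩
    rw [mem_preimage, hprod] at hq
    exact hq
  refine ⟨e.source ∩ e ⁻¹' Metric.ball (e p) r, e.isOpen_inter_preimage Metric.isOpen_ball,
    ⟨hpe, Metric.mem_ball_self hr⟩, ?_, Metric.ball (e p).1 r,
    fun s => f (e.symm (s, (e p).2)), Metric.isOpen_ball, (convex_ball _ _).ordConnected,
    ?_, ?_, ?_⟩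
  · rintro q ⟨hq1, hq2⟩
    rw [← e.left_inv hq1]
    exact hmaps hq2
  · rintro _ ⟨q, hq, rfl⟩
    rw [← hfst]
    exact (hVq q hq).1
  · have hm : MapsTo (fun s : ℝ => ((s, (e p).2) : ℝ × ℝ)) (Metric.ball (e p).1 r)
        (Metric.ball (e p) r) := fun s hs => by
      rw [hprod]; exact ⟨hs, Metric.mem_ball_self hr⟩
    exact hf.comp (hsm.comp (contDiff_id.prodMk contDiff_const).contDiffOn hm)
      (hmaps.comp hm)
  · intro q hq
    have h := hconst _ (hVq q hq).1 _ (hVq q hq).2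
    rw [Prod.mk.eta, e.left_inv hq.1, hfst] at h
    exact h
end
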